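/- Fix x ∈ ℂ, θ ∈ (π/8, π/2] and N ∈ ℕ. Then, as r → ∞ along the positive reals, with y := r e^{iθ} and all fractional powers of y principal-branch powers, P(x,y) · (2^{5/6}/√(π/3)) · y^{1/3} · exp( −3·4^{−4/3}·e^{−2iπ/3}·y^{4/3} + 4^{−2/3}·x·y^{2/3}·e^{−iπ/3} − x²/6 ) − ∑_{n=0}^{N} e^{i(2n+1)π/6} · A_n(x) · y^{−2n/3} = O( r^{−2(N+1)/3} ). -/

import Mathlib

open Real MeasureTheory Filter Asymptotics

/-- The Pearcey-type integral `P(x,y) = ∫₀^∞ exp(−t⁴ − x t²)·cos(y t) dt`. -/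
noncomputable def P (x y : ℂ) : ℂ :=
  ∫ t in Set.Ioi (0 : ℝ), Complex.exp (-(t : ℂ) ^ 4 - x * (t : ℂ) ^ 2) * Complex.cos (y * t)

/-- The coefficients `a_{n,m,k}(x)`. -/
noncomputable def a (x : ℂ) (n m k : ℕ) : ℂ :=
  (-1) ^ m * x ^ k * (2 : ℂ) ^ ((4 * ((2 * m - n - k : ℕ) : ℂ)) / 3) /
    ((k.factorial : ℂ) * ((2 * m - n - k).factorial : ℂ) * ((n - m).factorial : ℂ))

/-- The coefficients `c_n(x)`. -/
noncomputable def c (x : ℂ) (n : ℕ) : ℂ :=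
  ∑ k ∈ Finset.range (n / 2 + 1),
    x ^ (n - 2 * k) *
      ((((3 : ℝ) ^ ((k : ℤ) - (n : ℤ)) * (2 : ℝ) ^ (-(n : ℝ) / 3 - (k : ℝ)) *
          (n.factorial : ℝ) / ((k.factorial : ℝ) * ((n - 2 * k).factorial : ℝ))) : ℝ) : ℂ)

/-- The coefficients `A_n(x)`. -/
noncomputable def A (x : ℂ) (n : ℕ) : ℂ :=
  ∑ m ∈ Finset.Icc ((n + 1) / 2) n, ∑ k ∈ Finset.range (2 * m - n + 1),
    (-1) ^ (n + k) * a x n m k * c x (2 * m + n - k)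

lemma aux_gi (κ M : ℝ) (hκ : 0 < κ) :
    Integrable (fun p : ℝ => Real.exp (-κ * p ^ 2 + M * |p|)) := by
  have h := (integrable_exp_neg_mul_sq (half_pos hκ)).const_mul (Real.exp (M ^ 2 / (2 * κ)))
  refine h.mono' (by fun_prop) (ae_of_all _ fun p => ?_)
  rw [Real.norm_eq_abs, abs_of_pos (Real.exp_pos _), ← Real.exp_add]
  apply Real.exp_le_exp.2
  have h1 : M ^ 2 / (2 * κ) + -(κ / 2) * p ^ 2 - (-κ * p ^ 2 + M * |p|)
      = (κ * |p| - M) ^ 2 / (2 * κ) := by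
    field_simp
    rw [← sq_abs p]
    ring
  have h2 : 0 ≤ (κ * |p| - M) ^ 2 / (2 * κ) := by positivity
  linarith

lemma aux_powexp (l : ℕ) (p : ℝ) : |p| ^ l ≤ Real.exp (l * |p|) := by
  rw [Real.exp_nat_mul]
  have := Real.add_one_le_exp |p|
  exact pow_le_pow_left₀ (abs_nonneg p) (by linarith) l

lemma aux_exprem (n : ℕ) : ∀ z : ℂ,
    ‖Complex.exp z - ∑ m ∈ Finset.range n, z ^ m / (m.factorial : ℂ)‖
      ≤ ‖z‖ ^ n * max 1 (Real.exp z.re) := by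
  induction n with
  | zero => intro z; simp [Complex.norm_exp]
  | succ n ih =>
    intro z
    have key := norm_image_sub_le_of_norm_deriv_le_segment_01'
      (f := fun t : ℝ => Complex.exp (t * z) -
        ∑ m ∈ Finset.range (n + 1), ((t : ℂ) * z) ^ m / (m.factorial : ℂ))
      (f' := fun t : ℝ => z * (Complex.exp (t * z) -
        ∑ m ∈ Finset.range n, ((t : ℂ) * z) ^ m / (m.factorial : ℂ)))
      (C := ‖z‖ ^ (n + 1) * max 1 (Real.exp z.re)) ?_ ?_
    · simpa [Finset.sum_range_succ'] using key
    · intro t _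
      apply HasDerivAt.hasDerivWithinAt
      have h0 : HasDerivAt (fun t : ℝ => (t : ℂ) * z) z t := by
        simpa using (Complex.ofRealCLM.hasDerivAt (x := t)).mul_const z
      have h1 := h0.cexp
      have h2 : HasDerivAt (fun t : ℝ => ∑ m ∈ Finset.range (n + 1), ((t : ℂ) * z) ^ m / (m.factorial : ℂ))
          (∑ m ∈ Finset.range (n + 1), ((m : ℂ) * ((t : ℂ) * z) ^ (m - 1) * z) / (m.factorial : ℂ)) t := by
        apply HasDerivAt.fun_sum
        intro m _
        exact (h0.pow m).div_const _
      refine (h1.sub h2).congr_deriv (Eq.symm ?_)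
      rw [Finset.sum_range_succ', mul_sub, Finset.mul_sum]
      simp only [Nat.cast_zero, zero_mul, zero_div, add_zero]
      congr 1
      · ring
      · apply Finset.sum_congr rfl
        intro m _
        rw [Nat.factorial_succ]
        have : (m.factorial : ℂ) ≠ 0 := by exact_mod_cast m.factorial_ne_zero
        have : ((m : ℂ) + 1) ≠ 0 := by exact_mod_cast m.succ_ne_zero
        push_cast
        field_simp
    · intro t ht
      rw [norm_mul, pow_succ']
      rw [mul_assoc]
      refine mul_le_mul_of_nonneg_left ((ih _).trans ?_) (norm_nonneg _)
      have ht0 := ht.1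
      have ht1 := ht.2.le
      refine mul_le_mul (pow_le_pow_left₀ (norm_nonneg _) ?_ n) ?_ (by positivity) (by positivity)
      · rw [norm_mul, Complex.norm_real, Real.norm_eq_abs, abs_of_nonneg ht0]
        exact mul_le_of_le_one_left (norm_nonneg _) ht1
      · apply max_le (le_max_left _ _)
        simp only [Complex.re_ofReal_mul]
        rcases le_total z.re 0 with h | h
        · exact le_max_of_le_left (Real.exp_le_one_iff.2 (mul_nonpos_of_nonneg_of_nonpos ht0 h))
        · exact le_max_of_le_right (Real.exp_le_exp.2 (mul_le_of_le_one_left h ht1))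

lemma aux_rot_bound (x w : ℂ) (κ : ℝ) (hκ : 0 < κ) : ∃ C : ℝ, ∀ (σ : ℂ) (u : ℝ), ‖σ‖ = 1 →
    κ ≤ (σ ^ 4).re →
    ‖Complex.exp (-(σ * u) ^ 4 - x * (σ * u) ^ 2 + w * (σ * u))‖ ≤ C * Real.exp (-1 * u ^ 2) := by
  refine ⟨Real.exp ((‖x‖ + 2) ^ 2 / (4 * κ) + ‖w‖ ^ 2 / 4), fun σ u hσ hk => ?_⟩
  rw [Complex.norm_exp, ← Real.exp_add]
  apply Real.exp_le_exp.2
  have e1 : (-(σ * u) ^ 4 - x * (σ * u) ^ 2 + w * (σ * u)).re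
      = -(σ ^ 4).re * u ^ 4 + (-(x * (σ * u) ^ 2)).re + (w * (σ * u)).re := by
    have : (σ * u) ^ 4 = ((u ^ 4 : ℝ) : ℂ) * σ ^ 4 := by push_cast; ring
    rw [Complex.add_re, Complex.sub_re, Complex.neg_re, Complex.neg_re, this, Complex.re_ofReal_mul]
    ring
  have e2 : (-(x * (σ * u) ^ 2)).re ≤ ‖x‖ * u ^ 2 := by
    refine (Complex.re_le_norm _).trans (le_of_eq ?_)
    simp [hσ]
  have e3 : (w * (σ * u)).re ≤ ‖w‖ * |u| := by
    refine (Complex.re_le_norm _).trans (le_of_eq ?_)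
    simp [hσ]
  have e4 : ‖w‖ * |u| ≤ u ^ 2 + ‖w‖ ^ 2 / 4 := by
    rw [← sq_abs u]; nlinarith [sq_nonneg (|u| - ‖w‖ / 2)]
  have e5 : κ * u ^ 4 ≤ (σ ^ 4).re * u ^ 4 := by gcongr
  have e6 : (‖x‖ + 2) * u ^ 2 ≤ κ * u ^ 4 + (‖x‖ + 2) ^ 2 / (4 * κ) := by
    have h1 : κ * u ^ 4 + (‖x‖ + 2) ^ 2 / (4 * κ) - (‖x‖ + 2) * u ^ 2
      = (2 * κ * u ^ 2 - (‖x‖ + 2)) ^ 2 / (4 * κ) := by field_simp; ring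
    have h2 : 0 ≤ (2 * κ * u ^ 2 - (‖x‖ + 2)) ^ 2 / (4 * κ) := by positivity
    linarith
  rw [e1]; linarith

lemma aux_rot_deriv (x w : ℂ) (φ : ℝ) (h : |φ| < π / 8) :
    HasDerivAt (fun φ : ℝ => ∫ u : ℝ, Complex.exp (φ * Complex.I) *
      Complex.exp (-(Complex.exp (φ * Complex.I) * u) ^ 4 - x * (Complex.exp (φ * Complex.I) * u) ^ 2
        + w * (Complex.exp (φ * Complex.I) * u))) 0 φ := by
  obtain ⟨b, hb1, hb2⟩ := exists_between h
  have hb0 : 0 ≤ b := (abs_nonneg φ).trans hb1.le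
  have hκ : 0 < Real.cos (4 * b) := Real.cos_pos_of_mem_Ioo ⟨by linarith, by linarith⟩
  have hre : ∀ ψ : ℝ, |ψ| ≤ b → Real.cos (4 * b) ≤ (Complex.exp (ψ * Complex.I) ^ 4).re := by
    intro ψ hψ
    rw [← Complex.exp_nat_mul]
    have : ((4 : ℕ) : ℂ) * (ψ * Complex.I) = ((4 * ψ : ℝ) : ℂ) * Complex.I := by push_cast; ring
    rw [this, Complex.exp_ofReal_mul_I_re, ← Real.cos_abs (4 * ψ)]
    apply Real.cos_le_cos_of_nonneg_of_le_pi (abs_nonneg _) (by linarith [Real.pi_pos])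
    rw [abs_mul]; norm_num; linarith
  obtain ⟨C, hC⟩ := aux_rot_bound x w _ hκ
  have hC' : ∀ (ψ u : ℝ), |ψ| ≤ b → _ := fun ψ u hψ =>
    hC (Complex.exp (ψ * Complex.I)) u (Complex.norm_exp_ofReal_mul_I ψ) (hre ψ hψ)
  have hCn : 0 ≤ C := by
    have := (norm_nonneg _).trans (hC' 0 0 (by simpa using hb0))
    simpa using this
  have hg : ∀ n : ℕ, Integrable (fun u : ℝ => |u| ^ n * (C * Real.exp (-1 * u ^ 2))) := by
    intro n
    refine ((aux_gi 1 n one_pos).const_mul C).mono' (by fun_prop) (ae_of_all _ fun u => ?_)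
    rw [Real.norm_eq_abs, abs_of_nonneg (by positivity), Real.exp_add]
    have := aux_powexp n u
    have h2 : 0 ≤ C * Real.exp (-1 * u ^ 2) := by positivity
    nlinarith [mul_le_mul_of_nonneg_right this h2]
  set F' : ℝ → ℝ → ℂ := fun ψ u => 
    Complex.I * Complex.exp (ψ * Complex.I) *
      (Complex.exp (-(Complex.exp (ψ * Complex.I) * u) ^ 4 - x * (Complex.exp (ψ * Complex.I) * u) ^ 2
        + w * (Complex.exp (ψ * Complex.I) * u)) * (1 + (Complex.exp (ψ * Complex.I) * u) *
        (-4 * (Complex.exp (ψ * Complex.I) * u) ^ 3 - 2 * x * (Complex.exp (ψ * Complex.I) * u) + w)))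
    with hF'
  have hφ : ∀ (n : ℕ), Integrable (fun u : ℝ => (u : ℂ) ^ n * Complex.exp (-(Complex.exp (φ * Complex.I) * u) ^ 4 - x * (Complex.exp (φ * Complex.I) * u) ^ 2
        + w * (Complex.exp (φ * Complex.I) * u))) := by
    intro n
    refine (hg n).mono' (by fun_prop) (ae_of_all _ fun u => ?_)
    rw [norm_mul, norm_pow, Complex.norm_real, Real.norm_eq_abs]
    exact mul_le_mul_of_nonneg_left (hC' φ u hb1.le) (by positivity)
  have main := hasDerivAt_integral_of_dominated_loc_of_deriv_le (μ := volume) (𝕜 := ℝ)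
    (s := {ψ : ℝ | |ψ| < b}) (x₀ := φ) (F := fun (φ : ℝ) (u : ℝ) => Complex.exp (φ * Complex.I) *
      Complex.exp (-(Complex.exp (φ * Complex.I) * u) ^ 4 - x * (Complex.exp (φ * Complex.I) * u) ^ 2
        + w * (Complex.exp (φ * Complex.I) * u)))
    (F' := F')
    (bound := fun u => |u| ^ 0 * (C * Real.exp (-1 * u ^ 2)) + 4 * (|u| ^ 4 * (C * Real.exp (-1 * u ^ 2)))
      + 2 * ‖x‖ * (|u| ^ 2 * (C * Real.exp (-1 * u ^ 2))) + ‖w‖ * (|u| ^ 1 * (C * Real.exp (-1 * u ^ 2))))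
    ((isOpen_lt continuous_abs continuous_const).mem_nhds hb1)
    (Eventually.of_forall fun ψ => by fun_prop)
    (by simpa using (hφ 0).const_mul (Complex.exp (φ * Complex.I)))
    (by simp only [hF']; fun_prop)
    (ae_of_all _ fun u ψ hψ => by
      have h1 := hC' ψ u (le_of_lt hψ)
      simp only [hF']
      rw [norm_mul, norm_mul, norm_mul, Complex.norm_exp_ofReal_mul_I, Complex.norm_I]
      have hn : ‖Complex.exp (ψ * Complex.I) * u‖ = |u| := by
        rw [norm_mul, Complex.norm_exp_ofReal_mul_I, Complex.norm_real, Real.norm_eq_abs, one_mul]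
      generalize Complex.exp (ψ * Complex.I) * u = z at *
      have h2 : ‖1 + z * (-4 * z ^ 3 - 2 * x * z + w)‖ ≤ 1 + |u| * (4 * |u| ^ 3 + 2 * ‖x‖ * |u| + ‖w‖) := by
        refine (norm_add_le _ _).trans ?_
        rw [norm_mul, hn, norm_one]
        gcongr
        refine (norm_add_le _ _).trans ?_
        gcongr
        refine (norm_sub_le _ _).trans ?_
        simp [hn]
      calc _ ≤ 1 * 1 * ((C * Real.exp (-1 * u ^ 2)) * (1 + |u| * (4 * |u| ^ 3 + 2 * ‖x‖ * |u| + ‖w‖))) := by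
            gcongr
        _ = _ := by ring)
    (((((hg 0)).add ((hg 4).const_mul 4)).add ((hg 2).const_mul (2 * ‖x‖))).add ((hg 1).const_mul ‖w‖))
    (ae_of_all _ fun u ψ _ => by
      have h0 : HasDerivAt (fun t : ℝ => Complex.exp (t * Complex.I)) (Complex.exp (ψ * Complex.I) * Complex.I) ψ := by
        have := (Complex.ofRealCLM.hasDerivAt (x := ψ)).mul_const Complex.I
        simpa using this.cexp
      have h1 := h0.mul_const (u : ℂ)
      have h2 := (((h1.pow 4).neg.sub ((h1.pow 2).const_mul x)).add (h1.const_mul w)).cexp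
      refine (h0.mul h2).congr_deriv (Eq.symm ?_)
      simp only [hF', Pi.add_apply, Pi.sub_apply, Pi.neg_apply, Pi.pow_apply]
      push_cast
      ring)
  have hz : ∫ u, F' φ u = 0 := by
    apply integral_eq_zero_of_hasDerivAt_of_integrable (f := fun u : ℝ => Complex.I * Complex.exp (φ * Complex.I) * ((u : ℂ) ^ 1 * Complex.exp (-(Complex.exp (φ * Complex.I) * u) ^ 4 - x * (Complex.exp (φ * Complex.I) * u) ^ 2
        + w * (Complex.exp (φ * Complex.I) * u)))) _ main.1 ((hφ 1).const_mul _)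
    intro u
    have h0 : HasDerivAt (fun u : ℝ => (u : ℂ)) 1 u := Complex.ofRealCLM.hasDerivAt
    have h1 := h0.const_mul (Complex.exp (φ * Complex.I))
    have h2 := (((h1.pow 4).neg.sub ((h1.pow 2).const_mul x)).add (h1.const_mul w)).cexp
    refine (((h0.pow 1).mul h2).const_mul (Complex.I * Complex.exp (φ * Complex.I))).congr_deriv (Eq.symm ?_)
    simp only [hF', Pi.add_apply, Pi.sub_apply, Pi.neg_apply, Pi.pow_apply]
    push_cast
    ring
  rw [← hz]
  exact main.2

lemma aux_rot (x w : ℂ) (φ : ℝ) (h : |φ| < π / 8) :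
    ∫ u : ℝ, Complex.exp (-(u : ℂ) ^ 4 - x * (u : ℂ) ^ 2 + w * u) = 
    Complex.exp (φ * Complex.I) * ∫ u : ℝ, 
      Complex.exp (-(Complex.exp (φ * Complex.I) * u) ^ 4 - x * (Complex.exp (φ * Complex.I) * u) ^ 2
        + w * (Complex.exp (φ * Complex.I) * u)) := by
  have hc := (convex_Ioo (-(π / 8)) (π / 8)).is_const_of_fderivWithin_eq_zero (𝕜 := ℝ) 
    (f := fun φ : ℝ => ∫ u : ℝ, Complex.exp (φ * Complex.I) *
      Complex.exp (-(Complex.exp (φ * Complex.I) * u) ^ 4 - x * (Complex.exp (φ * Complex.I) * u) ^ 2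
        + w * (Complex.exp (φ * Complex.I) * u)))
    (fun ψ hψ => (aux_rot_deriv x w ψ (abs_lt.2 hψ)).differentiableAt.differentiableWithinAt)
    (fun ψ hψ => by
      have := (aux_rot_deriv x w ψ (abs_lt.2 hψ)).hasFDerivAt.hasFDerivWithinAt (s := Set.Ioo (-(π / 8)) (π / 8))
      rw [this.fderivWithin (isOpen_Ioo.uniqueDiffWithinAt hψ)]
      ext; simp)
    (x := 0) (y := φ) (by constructor <;> linarith [Real.pi_pos]) (abs_lt.1 h)
  simp only [integral_const_mul] at hc
  simpa using hc

lemma aux_P (x y : ℂ) : P x y = 1 / 2 * ∫ u : ℝ,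
    Complex.exp (-(u : ℂ) ^ 4 - x * (u : ℂ) ^ 2 + Complex.I * y * u) := by
  have hint : ∀ w : ℂ, Integrable (fun u : ℝ =>
      Complex.exp (-(u : ℂ) ^ 4 - x * (u : ℂ) ^ 2 + w * u)) := by
    intro w
    obtain ⟨C, hC⟩ := aux_rot_bound x w 1 one_pos
    refine ((integrable_exp_neg_mul_sq one_pos).const_mul C).mono' (by fun_prop)
      (ae_of_all _ fun u => ?_)
    simpa using hC 1 u (by simp) (by simp)
  have hI := hint (Complex.I * y)
  have h1 := intervalIntegral.integral_Iic_add_Ioi (b := (0 : ℝ)) hI.integrableOn hI.integrableOn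
  have h2 := integral_comp_neg_Ioi (0 : ℝ) (fun u : ℝ =>
      Complex.exp (-(u : ℂ) ^ 4 - x * (u : ℂ) ^ 2 + Complex.I * y * u))
  rw [neg_zero] at h2
  rw [← h1, ← h2, P, ← integral_add hI.comp_neg.integrableOn hI.integrableOn, ← integral_const_mul]
  congr 1
  ext t
  rw [Complex.cos, Complex.exp_add, Complex.exp_add]
  push_cast
  ring_nf

lemma aux_mom_int (B C : ℂ) (hB : 0 < B.re) (l : ℕ) :
    Integrable (fun p : ℝ => (p : ℂ) ^ l * Complex.exp (-B * p ^ 2 - C * p)) := by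
  refine (aux_gi B.re (l + ‖C‖) hB).mono' (by fun_prop) (ae_of_all _ fun p => ?_)
  rw [norm_mul, norm_pow, Complex.norm_real, Real.norm_eq_abs, Complex.norm_exp]
  calc _ ≤ Real.exp (l * |p|) * Real.exp (-B.re * p ^ 2 + ‖C‖ * |p|) := by
        gcongr
        · exact aux_powexp l p
        · have e1 : (-(C * p)).re ≤ ‖C‖ * |p| := by
            refine (Complex.re_le_norm _).trans (le_of_eq ?_)
            simp
          have e2 : (-B * (p : ℂ) ^ 2).re = - B.re * p ^ 2 := by
            have : -B * (p : ℂ) ^ 2 = ((p ^ 2 : ℝ) : ℂ) * (-B) := by push_cast; ring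
            rw [this, Complex.re_ofReal_mul, Complex.neg_re]; ring
          rw [Complex.sub_re, e2]
          rw [Complex.neg_re] at e1
          linarith
    _ = _ := by rw [← Real.exp_add]; ring_nf

lemma aux_mom_rec (B C : ℂ) (hB : 0 < B.re) (l : ℕ) :
    2 * B * ∫ p : ℝ, (p : ℂ) ^ (l + 1) * Complex.exp (-B * p ^ 2 - C * p) =
    l * (∫ p : ℝ, (p : ℂ) ^ (l - 1) * Complex.exp (-B * p ^ 2 - C * p)) -
      C * ∫ p : ℝ, (p : ℂ) ^ l * Complex.exp (-B * p ^ 2 - C * p) := by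
  have hi := aux_mom_int B C hB
  have := integral_eq_zero_of_hasDerivAt_of_integrable
    (f := fun p : ℝ => (p : ℂ) ^ l * Complex.exp (-B * p ^ 2 - C * p))
    (f' := fun p : ℝ => (l * ((p : ℂ) ^ (l - 1) * Complex.exp (-B * p ^ 2 - C * p)) -
      C * ((p : ℂ) ^ l * Complex.exp (-B * p ^ 2 - C * p))) -
      2 * B * ((p : ℂ) ^ (l + 1) * Complex.exp (-B * p ^ 2 - C * p)))
    (fun p => by
      have h0 : HasDerivAt (fun u : ℝ => (u : ℂ)) 1 p := Complex.ofRealCLM.hasDerivAt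
      refine ((h0.pow l).mul (((h0.pow 2).const_mul (-B)).sub (h0.const_mul C)).cexp).congr_deriv ?_
      simp only [Pi.sub_apply, Pi.pow_apply]
      push_cast
      ring)
    ((((hi (l - 1)).const_mul _).sub ((hi l).const_mul _)).sub ((hi (l + 1)).const_mul _)) (hi l)
  have s1 : Integrable (fun p : ℝ => (l * ((p : ℂ) ^ (l - 1) * Complex.exp (-B * p ^ 2 - C * p)) -
      C * ((p : ℂ) ^ l * Complex.exp (-B * p ^ 2 - C * p)))) :=
    ((hi (l - 1)).const_mul _).sub ((hi l).const_mul _)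
  rw [integral_sub s1 ((hi (l + 1)).const_mul _),
    integral_sub ((hi (l - 1)).const_mul _) ((hi l).const_mul _), integral_const_mul,
    integral_const_mul, integral_const_mul] at this
  linear_combination -this

noncomputable def hm (x : ℂ) : ℕ → ℂ
  | 0 => 1
  | 1 => x / 6
  | (l + 2) => x / 6 * hm x (l + 1) + (l + 1) / 12 * hm x l

lemma aux_mom (x σ : ℂ) (h4 : 0 < (σ ^ 4).re) (h2 : 0 < (σ ^ 2).re) (l : ℕ) :
    ∫ p : ℝ, (p : ℂ) ^ l * Complex.exp (-(6 * σ ^ 4) * p ^ 2 - (2 * x * σ ^ 2) * p) =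
    (Real.sqrt (π / 6) : ℂ) * Complex.exp (x ^ 2 / 6) * (σ ^ 2)⁻¹ * ((-1) ^ l * ((σ ^ 2)⁻¹) ^ l * hm x l) := by
  have hs : σ ≠ 0 := by rintro rfl; simp at h2
  have hB : 0 < (6 * σ ^ 4).re := by simpa using h4
  have hrec := aux_mom_rec (6 * σ ^ 4) (2 * x * σ ^ 2) hB
  have h0 : ∫ p : ℝ, (p : ℂ) ^ 0 * Complex.exp (-(6 * σ ^ 4) * p ^ 2 - (2 * x * σ ^ 2) * p) =
    (Real.sqrt (π / 6) : ℂ) * Complex.exp (x ^ 2 / 6) * (σ ^ 2)⁻¹ := by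
    have := integral_cexp_quadratic (b := -(6 * σ ^ 4)) (by simpa using h4) (-(2 * x * σ ^ 2)) 0
    have e : ∀ p : ℝ, (p : ℂ) ^ 0 * Complex.exp (-(6 * σ ^ 4) * p ^ 2 - (2 * x * σ ^ 2) * p) =
      Complex.exp (-(6 * σ ^ 4) * p ^ 2 + -(2 * x * σ ^ 2) * p + 0) := by
      intro p; rw [pow_zero, one_mul]; ring_nf
    simp only [e]
    rw [this]
    have e1 : (π : ℂ) / - -(6 * σ ^ 4) = ((Real.sqrt (π / 6) : ℂ) * (σ ^ 2)⁻¹) ^ 2 := by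
      rw [mul_pow, ← Complex.ofReal_pow, Real.sq_sqrt (by positivity)]
      push_cast
      field_simp
    have e2 : (0 : ℂ) - (-(2 * x * σ ^ 2)) ^ 2 / (4 * -(6 * σ ^ 4)) = x ^ 2 / 6 := by
      field_simp; ring
    have hre : 0 < ((Real.sqrt (π / 6) : ℂ) * (σ ^ 2)⁻¹).re := by
      rw [Complex.re_ofReal_mul, Complex.inv_re]
      have : 0 < Complex.normSq (σ ^ 2) := Complex.normSq_pos.2 (pow_ne_zero _ hs)
      positivity
    have hsq : (((Real.sqrt (π / 6) : ℂ) * (σ ^ 2)⁻¹) ^ 2) ^ (1 / 2 : ℂ) = (Real.sqrt (π / 6) : ℂ) * (σ ^ 2)⁻¹ := by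
      have := Complex.pow_cpow_nat_inv (x := (Real.sqrt (π / 6) : ℂ) * (σ ^ 2)⁻¹) (n := 2) two_ne_zero
        (by have := (Complex.abs_arg_lt_pi_div_two_iff.2 (Or.inl hre)); push_cast; linarith [(abs_lt.1 this).1])
        (by have := (Complex.abs_arg_lt_pi_div_two_iff.2 (Or.inl hre)); push_cast; linarith [(abs_lt.1 this).2])
      simpa using this
    rw [e1, e2, hsq]; ring
  induction l using Nat.twoStepInduction with
  | zero => rw [h0]; simp [hm]
  | one =>
    have := hrec 0
    simp only [Nat.cast_zero, zero_mul, zero_add, h0] at this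
    have h12 : 2 * (6 * σ ^ 4) ≠ 0 := by simp [hs]
    apply mul_left_cancel₀ h12
    rw [this]; simp only [hm]; field_simp; ring
  | more l ih1 ih2 =>
    have := hrec (l + 1)
    simp only [Nat.add_sub_cancel, ih1, ih2] at this
    have h12 : 2 * (6 * σ ^ 4) ≠ 0 := by simp [hs]
    apply mul_left_cancel₀ h12
    rw [this]; simp only [hm]; push_cast
    have hst : σ ^ 2 * (σ ^ 2)⁻¹ = 1 := mul_inv_cancel₀ (pow_ne_zero _ hs)
    have hst4 : σ ^ 4 * ((σ ^ 2)⁻¹) ^ 2 = 1 := by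
      rw [show σ ^ 4 * ((σ ^ 2)⁻¹) ^ 2 = (σ ^ 2 * (σ ^ 2)⁻¹) ^ 2 by ring, hst, one_pow]
    generalize (σ ^ 2)⁻¹ = τ at *
    generalize (√(π / 6) : ℂ) * Complex.exp (x ^ 2 / 6) * τ = K at *
    linear_combination (2 * x * K * (-1) ^ l * τ ^ l * hm x (l + 1)) * hst -
      (K * (-1) ^ l * τ ^ l * (2 * x * hm x (l + 1) + (l + 1) * hm x l)) * hst4
lemma aux_m_rec (α β : ℂ) (l : ℕ) (T : ℕ → ℕ → ℂ)
    (hT : ∀ l k, T l k = α ^ (l - 2 * k) / ((l - 2 * k).factorial : ℂ) * (β ^ k / (k.factorial : ℂ))) :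
    ((l : ℂ) + 2) * ∑ k ∈ Finset.range ((l + 2) / 2 + 1), T (l + 2) k =
    α * ∑ k ∈ Finset.range ((l + 1) / 2 + 1), T (l + 1) k +
      2 * β * ∑ k ∈ Finset.range (l / 2 + 1), T l k := by
  have h1 : ((l : ℂ) + 2) * ∑ k ∈ Finset.range ((l + 2) / 2 + 1), T (l + 2) k =
      ∑ k ∈ Finset.range ((l + 2) / 2 + 1), ((l : ℂ) + 2 - 2 * k) * T (l + 2) k +
      ∑ k ∈ Finset.range ((l + 2) / 2 + 1), (2 * (k : ℂ)) * T (l + 2) k := by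
    rw [Finset.mul_sum, ← Finset.sum_add_distrib]
    apply Finset.sum_congr rfl; intros; ring
  rw [h1]
  congr 1
  · have h2 : ∑ k ∈ Finset.range ((l + 2) / 2 + 1), ((l : ℂ) + 2 - 2 * k) * T (l + 2) k =
        ∑ k ∈ Finset.range ((l + 1) / 2 + 1), ((l : ℂ) + 2 - 2 * k) * T (l + 2) k := by
      symm
      apply Finset.sum_subset
      · intro k; simp only [Finset.mem_range]; omega
      · intro k hk hk2
        simp only [Finset.mem_range] at hk hk2
        have : l + 2 = 2 * k := by omega
        have : (l : ℂ) + 2 = 2 * k := by exact_mod_cast this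
        rw [this]; simp
    rw [h2, Finset.mul_sum]
    apply Finset.sum_congr rfl
    intro k hk
    simp only [Finset.mem_range] at hk
    obtain ⟨j, hj⟩ : ∃ j, l + 1 = 2 * k + j := ⟨l + 1 - 2 * k, by omega⟩
    rw [hT, hT, show l + 2 - 2 * k = j + 1 by omega, show l + 1 - 2 * k = j by omega,
      Nat.factorial_succ, pow_succ]
    have hj' : (l : ℂ) + 1 = 2 * k + j := by exact_mod_cast hj
    have e : (l : ℂ) + 2 - 2 * k = j + 1 := by linear_combination hj'
    rw [e]
    have : (j.factorial : ℂ) ≠ 0 := by exact_mod_cast j.factorial_ne_zero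
    have : (k.factorial : ℂ) ≠ 0 := by exact_mod_cast k.factorial_ne_zero
    have : ((j : ℂ) + 1) ≠ 0 := by exact_mod_cast j.succ_ne_zero
    push_cast
    field_simp
  · rw [show (l + 2) / 2 = l / 2 + 1 by omega, Finset.sum_range_succ', Finset.mul_sum]
    simp only [Nat.cast_zero, mul_zero, zero_mul, add_zero]
    apply Finset.sum_congr rfl
    intro k _
    rw [hT, hT, show l + 2 - 2 * (k + 1) = l - 2 * k by omega, Nat.factorial_succ, pow_succ]
    have : (k.factorial : ℂ) ≠ 0 := by exact_mod_cast k.factorial_ne_zero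
    have : ((k : ℂ) + 1) ≠ 0 := by exact_mod_cast k.succ_ne_zero
    push_cast
    field_simp

lemma aux_hm (x : ℂ) (l : ℕ) : hm x l = (l.factorial : ℂ) * ∑ k ∈ Finset.range (l / 2 + 1),
    (x / 6) ^ (l - 2 * k) / ((l - 2 * k).factorial : ℂ) * ((1 / 24 : ℂ) ^ k / (k.factorial : ℂ)) := by
  induction l using Nat.twoStepInduction with
  | zero => simp [hm]
  | one => simp [hm]
  | more l ih1 ih2 =>
    have h := aux_m_rec (x / 6) (1 / 24) l _ (fun l k => rfl)
    rw [hm, ih1, ih2, Nat.factorial_succ (l + 1)]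
    push_cast
    have hf : (((l + 1).factorial : ℕ) : ℂ) = (l + 1) * (l.factorial : ℂ) := by
      rw [Nat.factorial_succ]; push_cast; ring
    rw [hf]
    linear_combination (-(((l : ℂ) + 1) * (l.factorial : ℂ))) * h

lemma aux_c (x : ℂ) (l : ℕ) : c x l = (((2 : ℝ) ^ (2 * (l : ℝ) / 3) : ℝ) : ℂ) * hm x l := by
  rw [aux_hm, c, Finset.mul_sum, Finset.mul_sum]
  apply Finset.sum_congr rfl
  intro k hk
  simp only [Finset.mem_range] at hk
  obtain ⟨j, rfl⟩ : ∃ j, l = 2 * k + j := ⟨l - 2 * k, by omega⟩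
  rw [show 2 * k + j - 2 * k = j by omega]
  have e1 : (2 : ℝ) ^ (-((2 * k + j : ℕ) : ℝ) / 3 - (k : ℝ)) =
      (2 : ℝ) ^ (2 * ((2 * k + j : ℕ) : ℝ) / 3) / 2 ^ (3 * k + j) := by
    rw [← Real.rpow_natCast 2 (3 * k + j), ← Real.rpow_sub two_pos]
    congr 1
    push_cast; ring
  have e2 : (3 : ℝ) ^ ((k : ℤ) - ((2 * k + j : ℕ) : ℤ)) = 1 / 3 ^ (k + j) := by
    rw [show (k : ℤ) - ((2 * k + j : ℕ) : ℤ) = -((k + j : ℕ) : ℤ) by push_cast; ring,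
      zpow_neg, zpow_natCast, one_div]
  rw [e1, e2]
  generalize (2 : ℝ) ^ (2 * ((2 * k + j : ℕ) : ℝ) / 3) = R
  have : (j.factorial : ℂ) ≠ 0 := by exact_mod_cast j.factorial_ne_zero
  have : (k.factorial : ℂ) ≠ 0 := by exact_mod_cast k.factorial_ne_zero
  have e3 : (3 : ℂ) ^ (k + j) * 2 ^ (3 * k + j) = 6 ^ j * 24 ^ k := by
    rw [show (24 : ℂ) = 3 * 2 ^ 3 by norm_num, show (6 : ℂ) = 3 * 2 by norm_num,
      mul_pow, mul_pow, pow_add, pow_add, pow_mul]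
    ring
  push_cast
  rw [div_pow, div_pow, one_pow]
  field_simp
  linear_combination (-(x ^ j * (R : ℂ) * ((2 * k + j).factorial : ℂ))) * e3

noncomputable def tt (q1 q2 : ℂ) (m n : ℕ) : ℂ :=
  q1 ^ (2 * m - n) * q2 ^ (n - m) / (((2 * m - n).factorial : ℂ) * ((n - m).factorial : ℂ))

lemma aux_tt1 (ε q1 q2 : ℂ) (m N : ℕ) (hm : m ≤ N) :
    (ε * q1 + ε ^ 2 * q2) ^ m / (m.factorial : ℂ) =
    ∑ n ∈ (Finset.range (2 * N + 1)).filter (fun n => m ≤ n ∧ n ≤ 2 * m), ε ^ n * tt q1 q2 m n := by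
  rw [add_pow, Finset.sum_div]
  refine Finset.sum_bij' (fun i _ => 2 * m - i) (fun n _ => 2 * m - n) ?_ ?_ ?_ ?_ ?_
  · intro i hi; simp only [Finset.mem_range, Finset.mem_filter] at *; omega
  · intro i hi; simp only [Finset.mem_range, Finset.mem_filter] at *; omega
  · intro i hi; simp only [Finset.mem_range, Finset.mem_filter] at *; omega
  · intro i hi; simp only [Finset.mem_range, Finset.mem_filter] at *; omega
  · intro i hi
    simp only [Finset.mem_range] at hi
    obtain ⟨j, rfl⟩ : ∃ j, m = i + j := ⟨m - i, by omega⟩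
    rw [tt, show 2 * (i + j) - (2 * (i + j) - i) = i by omega,
      show 2 * (i + j) - i - (i + j) = j by omega, show 2 * (i + j) - i = i + 2 * j by omega,
      show i + j - i = j by omega]
    have hc := Nat.add_choose_mul_factorial_mul_factorial i j
    rw [← Nat.choose_symm_add] at hc
    have hc' : ((i + j).choose i : ℂ) * (i.factorial : ℂ) * (j.factorial : ℂ) = ((i + j).factorial : ℂ) := by
      exact_mod_cast hc
    have : (j.factorial : ℂ) ≠ 0 := by exact_mod_cast j.factorial_ne_zero
    have : (i.factorial : ℂ) ≠ 0 := by exact_mod_cast i.factorial_ne_zero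
    have : ((i + j).factorial : ℂ) ≠ 0 := by exact_mod_cast (i + j).factorial_ne_zero
    field_simp
    rw [← hc', mul_pow, mul_pow]
    ring

lemma aux_tt2 (ε q1 q2 : ℂ) (N : ℕ) :
    ∑ m ∈ Finset.range (N + 1), (ε * q1 + ε ^ 2 * q2) ^ m / (m.factorial : ℂ) =
    ∑ n ∈ Finset.range (N + 1), ε ^ n * ∑ m ∈ Finset.Icc ((n + 1) / 2) n, tt q1 q2 m n +
    ∑ n ∈ Finset.Ico (N + 1) (2 * N + 1), ε ^ n *
      ∑ m ∈ (Finset.range (N + 1)).filter (fun m => m ≤ n ∧ n ≤ 2 * m), tt q1 q2 m n := by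
  have h1 : ∑ m ∈ Finset.range (N + 1), (ε * q1 + ε ^ 2 * q2) ^ m / (m.factorial : ℂ) =
      ∑ n ∈ Finset.range (2 * N + 1), ε ^ n *
      ∑ m ∈ (Finset.range (N + 1)).filter (fun m => m ≤ n ∧ n ≤ 2 * m), tt q1 q2 m n := by
    rw [Finset.sum_congr rfl (fun m hm => aux_tt1 ε q1 q2 m N (by simpa [Nat.lt_succ_iff] using hm))]
    simp only [Finset.mul_sum]
    apply Finset.sum_comm'
    intro m n
    simp only [Finset.mem_range, Finset.mem_filter]
    tauto
  rw [h1, ← Finset.sum_range_add_sum_Ico _ (show N + 1 ≤ 2 * N + 1 by omega)]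
  congr 1
  apply Finset.sum_congr rfl
  intro n hn
  congr 1
  apply Finset.sum_congr _ (fun _ _ => rfl)
  ext m
  simp only [Finset.mem_range, Finset.mem_filter, Finset.mem_Icc] at *
  omega

lemma aux_ptw (N : ℕ) (ε : ℝ) (h0 : 0 ≤ ε) (h1 : ε ≤ 1) (q0 q1 q2 : ℂ) (R : ℝ)
    (hR0 : q0.re ≤ R) (hR1 : (q0 + (ε * q1 + ε ^ 2 * q2)).re ≤ R) :
    ‖Complex.exp (q0 + (ε * q1 + ε ^ 2 * q2)) -
      ∑ n ∈ Finset.range (N + 1), (ε : ℂ) ^ n * (Complex.exp q0 * ∑ m ∈ Finset.Icc ((n + 1) / 2) n, tt q1 q2 m n)‖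
    ≤ ε ^ (N + 1) * ((1 + (2 * N + 1) * (N + 1)) * ((1 + ‖q1‖ + ‖q2‖) ^ (N + 1) * Real.exp R)) := by
  set Q := 1 + ‖q1‖ + ‖q2‖ with hQ
  have hn1 := norm_nonneg q1
  have hn2 := norm_nonneg q2
  have hQ1 : 1 ≤ Q := by linarith
  set z : ℂ := ε * q1 + ε ^ 2 * q2 with hz
  have hzn : ‖z‖ ≤ ε * Q := by
    refine (norm_add_le _ _).trans ?_
    rw [norm_mul, norm_mul, norm_pow, Complex.norm_real, Real.norm_eq_abs, abs_of_nonneg h0]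
    have : ε ^ 2 ≤ ε := by nlinarith
    nlinarith [mul_le_mul_of_nonneg_right this hn2]
  have e1 : Complex.exp (q0 + z) -
      ∑ n ∈ Finset.range (N + 1), (ε : ℂ) ^ n * (Complex.exp q0 * ∑ m ∈ Finset.Icc ((n + 1) / 2) n, tt q1 q2 m n)
      = Complex.exp q0 * (Complex.exp z - ∑ m ∈ Finset.range (N + 1), z ^ m / (m.factorial : ℂ)) +
        Complex.exp q0 * ∑ n ∈ Finset.Ico (N + 1) (2 * N + 1), (ε : ℂ) ^ n *
          ∑ m ∈ (Finset.range (N + 1)).filter (fun m => m ≤ n ∧ n ≤ 2 * m), tt q1 q2 m n := by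
    rw [hz, aux_tt2, ← hz, Complex.exp_add, mul_sub, mul_add, Finset.mul_sum]
    have : ∀ n, (ε : ℂ) ^ n * (Complex.exp q0 * ∑ m ∈ Finset.Icc ((n + 1) / 2) n, tt q1 q2 m n) =
      Complex.exp q0 * ((ε : ℂ) ^ n * ∑ m ∈ Finset.Icc ((n + 1) / 2) n, tt q1 q2 m n) := by
      intro n; ring
    simp only [this]
    ring
  rw [e1]
  have b1 : ‖Complex.exp q0 * (Complex.exp z - ∑ m ∈ Finset.range (N + 1), z ^ m / (m.factorial : ℂ))‖
      ≤ ε ^ (N + 1) * (Q ^ (N + 1) * Real.exp R) := by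
    rw [norm_mul, Complex.norm_exp]
    calc _ ≤ Real.exp q0.re * ((ε * Q) ^ (N + 1) * max 1 (Real.exp z.re)) := by
          gcongr
          exact (aux_exprem (N + 1) z).trans (mul_le_mul_of_nonneg_right
            (pow_le_pow_left₀ (norm_nonneg _) hzn _) (by positivity))
      _ = (ε * Q) ^ (N + 1) * (Real.exp q0.re * max 1 (Real.exp z.re)) := by ring
      _ ≤ (ε * Q) ^ (N + 1) * Real.exp R := by
          refine mul_le_mul_of_nonneg_left ?_ (by positivity)
          rw [mul_max_of_nonneg _ _ (Real.exp_pos _).le, mul_one, ← Real.exp_add, ← Complex.add_re]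
          exact max_le (Real.exp_le_exp.2 hR0) (Real.exp_le_exp.2 hR1)
      _ = _ := by rw [mul_pow]; ring
  have btt : ∀ n, ∀ m ∈ (Finset.range (N + 1)).filter (fun m => m ≤ n ∧ n ≤ 2 * m),
      ‖tt q1 q2 m n‖ ≤ Q ^ (N + 1) := by
    intro n m hm
    simp only [Finset.mem_range, Finset.mem_filter] at hm
    rw [tt, norm_div, norm_mul, norm_pow, norm_pow]
    have hf : 1 ≤ ‖((2 * m - n).factorial : ℂ) * ((n - m).factorial : ℂ)‖ := by
      rw [norm_mul, Complex.norm_natCast, Complex.norm_natCast]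
      exact_mod_cast Nat.mul_pos (Nat.factorial_pos _) (Nat.factorial_pos _)
    calc _ ≤ ‖q1‖ ^ (2 * m - n) * ‖q2‖ ^ (n - m) := div_le_self (by positivity) hf
      _ ≤ Q ^ (2 * m - n) * Q ^ (n - m) := by gcongr <;> linarith
      _ = Q ^ m := by rw [← pow_add]; congr 1; omega
      _ ≤ Q ^ (N + 1) := pow_le_pow_right₀ hQ1 (by omega)
  have b2 : ‖Complex.exp q0 * ∑ n ∈ Finset.Ico (N + 1) (2 * N + 1), (ε : ℂ) ^ n *
          ∑ m ∈ (Finset.range (N + 1)).filter (fun m => m ≤ n ∧ n ≤ 2 * m), tt q1 q2 m n‖ ≤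
      Real.exp R * ((2 * N + 1) * (ε ^ (N + 1) * ((N + 1) * Q ^ (N + 1)))) := by
    rw [norm_mul, Complex.norm_exp]
    refine mul_le_mul (Real.exp_le_exp.2 hR0) ?_ (norm_nonneg _) (Real.exp_pos _).le
    have := norm_sum_le_of_le (Finset.Ico (N + 1) (2 * N + 1)) (f := fun n => (ε : ℂ) ^ n *
          ∑ m ∈ (Finset.range (N + 1)).filter (fun m => m ≤ n ∧ n ≤ 2 * m), tt q1 q2 m n)
          (n := fun _ => ε ^ (N + 1) * ((N + 1) * Q ^ (N + 1))) ?_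
    · refine this.trans ?_
      rw [Finset.sum_const, Nat.card_Ico, nsmul_eq_mul]
      refine mul_le_mul_of_nonneg_right ?_ (by positivity)
      have : 2 * N + 1 - (N + 1) ≤ 2 * N + 1 := Nat.sub_le _ _
      exact_mod_cast this
    · intro n hn
      simp only [Finset.mem_Ico] at hn
      rw [norm_mul, norm_pow, Complex.norm_real, Real.norm_eq_abs, abs_of_nonneg h0]
      refine mul_le_mul (pow_le_pow_of_le_one h0 h1 hn.1) ?_ (norm_nonneg _) (by positivity)
      refine (norm_sum_le_of_le _ (btt n)).trans ?_
      rw [Finset.sum_const, nsmul_eq_mul]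
      refine mul_le_mul_of_nonneg_right ?_ (by positivity)
      have := Finset.card_filter_le (Finset.range (N + 1)) (fun m => m ≤ n ∧ n ≤ 2 * m)
      rw [Finset.card_range] at this
      exact_mod_cast this
  refine (norm_add_le _ _).trans ((add_le_add b1 b2).trans (le_of_eq ?_))
  ring

lemma aux_fn_expand (x σ : ℂ) (n : ℕ) (p : ℂ) :
    ∑ m ∈ Finset.Icc ((n + 1) / 2) n, tt (-(4 * σ ^ 4) * p ^ 3 - x * σ ^ 2 * p ^ 2) (-σ ^ 4 * p ^ 4) m n =
    ∑ m ∈ Finset.Icc ((n + 1) / 2) n, ∑ k ∈ Finset.range (2 * m - n + 1),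
      ((-1) ^ m * x ^ k * 4 ^ (2 * m - n - k) /
      ((k.factorial : ℂ) * ((2 * m - n - k).factorial : ℂ) * ((n - m).factorial : ℂ)) *
        (σ ^ 2) ^ (2 * m - k)) * p ^ (2 * m + n - k) := by
  apply Finset.sum_congr rfl
  intro m hm
  simp only [Finset.mem_Icc] at hm
  rw [tt, sub_eq_neg_add, add_pow, Finset.sum_mul, Finset.sum_div]
  apply Finset.sum_congr rfl
  intro k hk
  simp only [Finset.mem_range] at hk
  obtain ⟨i, hi⟩ : ∃ i, n = m + i := ⟨n - m, by omega⟩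
  obtain ⟨j, hj⟩ : ∃ j, 2 * m - n = k + j := ⟨2 * m - n - k, by omega⟩
  obtain rfl : m = i + k + j := by omega
  subst hi
  rw [hj, show k + j - k = j by omega, show i + k + j + i - (i + k + j) = i by omega,
    show 2 * (i + k + j) - k = 2 * i + k + 2 * j by omega,
    show 2 * (i + k + j) + (i + k + j + i) - k = 4 * i + 2 * k + 3 * j by omega]
  have hc := Nat.add_choose_mul_factorial_mul_factorial k j
  rw [← Nat.choose_symm_add] at hc
  have hc' : ((k + j).choose k : ℂ) * (k.factorial : ℂ) * (j.factorial : ℂ) = ((k + j).factorial : ℂ) := by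
    exact_mod_cast hc
  have : (j.factorial : ℂ) ≠ 0 := by exact_mod_cast j.factorial_ne_zero
  have : (k.factorial : ℂ) ≠ 0 := by exact_mod_cast k.factorial_ne_zero
  have : (i.factorial : ℂ) ≠ 0 := by exact_mod_cast i.factorial_ne_zero
  have : ((k + j).factorial : ℂ) ≠ 0 := by exact_mod_cast (k + j).factorial_ne_zero
  have e1 : (-(x * σ ^ 2 * p ^ 2)) ^ k = (-1) ^ k * x ^ k * (σ ^ 2) ^ k * p ^ (2 * k) := by
    rw [neg_pow, mul_pow, mul_pow]; ring
  have e2 : (-(4 * σ ^ 4) * p ^ 3) ^ j = (-1) ^ j * 4 ^ j * (σ ^ 2) ^ (2 * j) * p ^ (3 * j) := by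
    rw [mul_pow, neg_pow, mul_pow]; ring
  have e3 : (-σ ^ 4 * p ^ 4) ^ i = (-1) ^ i * (σ ^ 2) ^ (2 * i) * p ^ (4 * i) := by
    rw [mul_pow, neg_pow]; ring
  rw [e1, e2, e3]
  generalize σ ^ 2 = s
  field_simp
  rw [← hc']
  ring

noncomputable def q0 (x σ : ℂ) (p : ℝ) : ℂ := -(6 * σ ^ 4) * p ^ 2 - (2 * x * σ ^ 2) * p
noncomputable def q1 (x σ : ℂ) (p : ℝ) : ℂ := -(4 * σ ^ 4) * p ^ 3 - x * σ ^ 2 * p ^ 2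
noncomputable def q2 (σ : ℂ) (p : ℝ) : ℂ := -σ ^ 4 * p ^ 4
noncomputable def fn (x σ : ℂ) (n : ℕ) (p : ℝ) : ℂ :=
  Complex.exp (q0 x σ p) * ∑ m ∈ Finset.Icc ((n + 1) / 2) n, tt (q1 x σ p) (q2 σ p) m n

lemma aux_fn (x σ : ℂ) (n : ℕ) : fn x σ n = fun p : ℝ =>
    ∑ m ∈ Finset.Icc ((n + 1) / 2) n, ∑ k ∈ Finset.range (2 * m - n + 1),
      ((-1) ^ m * x ^ k * 4 ^ (2 * m - n - k) /
      ((k.factorial : ℂ) * ((2 * m - n - k).factorial : ℂ) * ((n - m).factorial : ℂ)) *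
        (σ ^ 2) ^ (2 * m - k)) *
        ((p : ℂ) ^ (2 * m + n - k) * Complex.exp (-(6 * σ ^ 4) * p ^ 2 - (2 * x * σ ^ 2) * p)) := by
  ext p
  rw [fn, q1, q2, q0, aux_fn_expand, Finset.mul_sum]
  apply Finset.sum_congr rfl
  intro m _
  rw [Finset.mul_sum]
  apply Finset.sum_congr rfl
  intro k _
  ring

lemma aux_fn_int (x σ : ℂ) (h4 : 0 < (σ ^ 4).re) (n : ℕ) : Integrable (fn x σ n) := by
  rw [aux_fn]
  refine integrable_finsetSum _ fun m _ => integrable_finsetSum _ fun k _ => ?_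
  exact (aux_mom_int _ _ (by simpa using h4) _).const_mul _

lemma aux_fn_val (x σ : ℂ) (h4 : 0 < (σ ^ 4).re) (h2 : 0 < (σ ^ 2).re) (n : ℕ) :
    ∫ p, fn x σ n p = (Real.sqrt (π / 6) : ℂ) * Complex.exp (x ^ 2 / 6) * (σ ^ 2)⁻¹ *
      (((σ ^ 2)⁻¹) ^ n * (((2 : ℝ) ^ (-(4 * (n : ℝ) / 3)) : ℝ) : ℂ) * A x n) := by
  have hs : σ ^ 2 ≠ 0 := by intro h; rw [h] at h2; simp at h2
  have hi := fun l => aux_mom_int (6 * σ ^ 4) (2 * x * σ ^ 2) (by simpa using h4) l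
  rw [aux_fn, integral_finsetSum _ (fun m _ => integrable_finsetSum _ fun k _ => (hi _).const_mul _),
    A, Finset.mul_sum, Finset.mul_sum]
  apply Finset.sum_congr rfl
  intro m hm
  rw [integral_finsetSum _ (fun k _ => (hi _).const_mul _), Finset.mul_sum, Finset.mul_sum]
  apply Finset.sum_congr rfl
  intro k hk
  rw [integral_const_mul, aux_mom x σ h4 h2, a, aux_c]
  simp only [Finset.mem_range, Finset.mem_Icc] at hk hm
  obtain ⟨i, hi⟩ : ∃ i, n = m + i := ⟨n - m, by omega⟩
  obtain ⟨j, hj⟩ : ∃ j, 2 * m - n = k + j := ⟨2 * m - n - k, by omega⟩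
  obtain rfl : m = i + k + j := by omega
  subst hi
  rw [hj, show k + j - k = j by omega, show i + k + j + i - (i + k + j) = i by omega,
    show 2 * (i + k + j) - k = 2 * i + k + 2 * j by omega,
    show 2 * (i + k + j) + (i + k + j + i) - k = 4 * i + 2 * k + 3 * j by omega,
    show i + k + j + i = 2 * i + k + j by omega]
  have e1 : (2 : ℂ) ^ (4 * (j : ℂ) / 3) = (((2 : ℝ) ^ (4 * (j : ℝ) / 3) : ℝ) : ℂ) := by
    rw [Complex.ofReal_cpow (by norm_num)]; push_cast; rfl
  have e2 : (2 : ℝ) ^ (-(4 * ((2 * i + k + j : ℕ) : ℝ) / 3)) * ((2 : ℝ) ^ (4 * (j : ℝ) / 3) *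
      (2 : ℝ) ^ (2 * ((4 * i + 2 * k + 3 * j : ℕ) : ℝ) / 3)) = 4 ^ j := by
    rw [← Real.rpow_add two_pos, ← Real.rpow_add two_pos, show (4 : ℝ) = 2 ^ (2 : ℝ) by norm_num,
      ← Real.rpow_natCast, ← Real.rpow_mul two_pos.le]
    congr 1
    push_cast
    ring
  have e2' : (((2 : ℝ) ^ (-(4 * ((2 * i + k + j : ℕ) : ℝ) / 3)) : ℝ) : ℂ) *
      ((((2 : ℝ) ^ (4 * (j : ℝ) / 3) : ℝ) : ℂ) *
      (((2 : ℝ) ^ (2 * ((4 * i + 2 * k + 3 * j : ℕ) : ℝ) / 3) : ℝ) : ℂ)) = 4 ^ j := by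
    exact_mod_cast e2
  rw [e1, ← e2']
  generalize (((2 : ℝ) ^ (-(4 * ((2 * i + k + j : ℕ) : ℝ) / 3)) : ℝ) : ℂ) = r1
  generalize (((2 : ℝ) ^ (4 * (j : ℝ) / 3) : ℝ) : ℂ) = r2
  generalize (((2 : ℝ) ^ (2 * ((4 * i + 2 * k + 3 * j : ℕ) : ℝ) / 3) : ℝ) : ℂ) = r3
  have e3 : (σ ^ 2) ^ (2 * i + k + 2 * j) * ((σ ^ 2)⁻¹) ^ (4 * i + 2 * k + 3 * j) = ((σ ^ 2)⁻¹) ^ (2 * i + k + j) := by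
    rw [show 4 * i + 2 * k + 3 * j = (2 * i + k + 2 * j) + (2 * i + k + j) by omega, pow_add (σ ^ 2)⁻¹,
      ← mul_assoc, ← mul_pow, mul_inv_cancel₀ hs, one_pow, one_mul]
  have e4 : (-1 : ℂ) ^ (4 * i + 2 * k + 3 * j) = (-1) ^ (2 * i + k + j + k) := by
    rw [show 4 * i + 2 * k + 3 * j = (2 * i + k + j + k) + 2 * (i + j) by omega, pow_add, pow_mul]
    simp
  rw [← e3, e4]
  ring

lemma aux_est (x σ : ℂ) (hσ : ‖σ‖ = 1) (h4 : 0 < (σ ^ 4).re) (N : ℕ) :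
    ∃ C ε₀ : ℝ, 0 < ε₀ ∧ ∀ ε : ℝ, 0 < ε → ε ≤ ε₀ →
      ‖(∫ p : ℝ, Complex.exp (q0 x σ p + (ε * q1 x σ p + ε ^ 2 * q2 σ p))) -
        ∑ n ∈ Finset.range (N + 1), (ε : ℂ) ^ n * ∫ p, fn x σ n p‖ ≤ C * ε ^ (N + 1) := by
  set κ := (σ ^ 4).re with hκ
  set G : ℝ → ℝ := fun p => (1 + (2 * (N : ℝ) + 1) * (N + 1)) * ((6 + ‖x‖) ^ (N + 1)) *
    Real.exp (-κ * p ^ 2 + (2 * ‖x‖ + 4 * (N + 1)) * |p|) with hG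
  have hGi : Integrable G := (aux_gi κ _ h4).const_mul _
  refine ⟨∫ p, G p, min 1 (κ / (‖x‖ + 1)), by positivity, fun ε h0 h1 => ?_⟩
  have hε1 : ε ≤ 1 := h1.trans (min_le_left _ _)
  have hεx : ε * ‖x‖ ≤ κ := by
    have := h1.trans (min_le_right _ _)
    rw [le_div_iff₀ (by positivity)] at this
    nlinarith [norm_nonneg x]
  have hre : ∀ p : ℝ, ∀ t : ℝ, (-(t : ℂ) * (x * σ ^ 2)).re ≤ ‖x‖ * |t| := by
    intro p t
    refine (Complex.re_le_norm _).trans (le_of_eq ?_)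
    simp [hσ, mul_comm]
  have hR0 : ∀ p, (q0 x σ p).re ≤ -κ * p ^ 2 + 2 * ‖x‖ * |p| := by
    intro p
    have e : q0 x σ p = ((-6 * p ^ 2 : ℝ) : ℂ) * σ ^ 4 + (-((2 * p : ℝ) : ℂ) * (x * σ ^ 2)) := by
      rw [q0]; push_cast; ring
    rw [e, Complex.add_re, Complex.re_ofReal_mul, ← hκ]
    have := hre p (2 * p)
    rw [abs_mul, abs_two] at this
    nlinarith [mul_nonneg h4.le (sq_nonneg p)]
  have hR1 : ∀ p, (q0 x σ p + (ε * q1 x σ p + ε ^ 2 * q2 σ p)).re ≤ -κ * p ^ 2 + 2 * ‖x‖ * |p| := by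
    intro p
    have e : q0 x σ p + (ε * q1 x σ p + ε ^ 2 * q2 σ p) =
        ((-(p ^ 2 * ((2 + ε * p) ^ 2 + 2)) : ℝ) : ℂ) * σ ^ 4 + (-((2 * p : ℝ) : ℂ) * (x * σ ^ 2))
        + (-((ε * p ^ 2 : ℝ) : ℂ) * (x * σ ^ 2)) := by
      rw [q0, q1, q2]; push_cast; ring
    rw [e, Complex.add_re, Complex.add_re, Complex.re_ofReal_mul, ← hκ]
    have a1 := hre p (2 * p)
    have a2 := hre p (ε * p ^ 2)
    rw [abs_mul, abs_two] at a1
    rw [abs_of_nonneg (by positivity)] at a2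
    have a3 := mul_le_mul_of_nonneg_right hεx (sq_nonneg p)
    have a4 : 0 ≤ κ * (p ^ 2 * (2 + ε * p) ^ 2) := by positivity
    nlinarith
  have hFi : Integrable (fun p : ℝ => Complex.exp (q0 x σ p + (ε * q1 x σ p + ε ^ 2 * q2 σ p))) := by
    refine (aux_gi κ (2 * ‖x‖) h4).mono' (by unfold q0 q1 q2; fun_prop) (ae_of_all _ fun p => ?_)
    rw [Complex.norm_exp]
    exact Real.exp_le_exp.2 (hR1 p)
  have hfi : ∀ n, Integrable (fun p => (ε : ℂ) ^ n * fn x σ n p) := fun n =>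
    (aux_fn_int x σ h4 n).const_mul _
  have e : (∫ p : ℝ, Complex.exp (q0 x σ p + (ε * q1 x σ p + ε ^ 2 * q2 σ p))) -
        ∑ n ∈ Finset.range (N + 1), (ε : ℂ) ^ n * ∫ p, fn x σ n p =
      ∫ p : ℝ, (Complex.exp (q0 x σ p + (ε * q1 x σ p + ε ^ 2 * q2 σ p)) -
        ∑ n ∈ Finset.range (N + 1), (ε : ℂ) ^ n * fn x σ n p) := by
    rw [integral_sub hFi (integrable_finsetSum _ fun n _ => hfi n), integral_finsetSum _ fun n _ => hfi n]
    simp only [integral_const_mul]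
  rw [e, mul_comm, ← integral_const_mul]
  refine norm_integral_le_of_norm_le (hGi.const_mul _) (ae_of_all _ fun p => ?_)
  refine (aux_ptw N ε h0.le hε1 _ (q1 x σ p) (q2 σ p) _ (hR0 p) (hR1 p)).trans ?_
  refine mul_le_mul_of_nonneg_left ?_ (by positivity)
  have hQ : 1 + ‖q1 x σ p‖ + ‖q2 σ p‖ ≤ (6 + ‖x‖) * Real.exp (4 * |p|) := by
    have n1 : ‖q1 x σ p‖ ≤ 4 * |p| ^ 3 + ‖x‖ * |p| ^ 2 := by
      rw [q1]
      refine (norm_sub_le _ _).trans (le_of_eq ?_)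
      simp [hσ]
    have n2 : ‖q2 σ p‖ = |p| ^ 4 := by
      rw [q2]; simp [hσ]
    have hp := abs_nonneg p
    have m4 : |p| ^ 4 ≤ Real.exp (4 * |p|) := by simpa using aux_powexp 4 p
    have m3 : |p| ^ 3 ≤ Real.exp (4 * |p|) :=
      (aux_powexp 3 p).trans (Real.exp_le_exp.2 (by push_cast; linarith))
    have m2 : |p| ^ 2 ≤ Real.exp (4 * |p|) :=
      (aux_powexp 2 p).trans (Real.exp_le_exp.2 (by push_cast; linarith))
    have m0 : 1 ≤ Real.exp (4 * |p|) := Real.one_le_exp (by positivity)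
    nlinarith [mul_le_mul_of_nonneg_left m2 (norm_nonneg x)]
  calc _ ≤ (1 + (2 * (N : ℝ) + 1) * (N + 1)) * (((6 + ‖x‖) * Real.exp (4 * |p|)) ^ (N + 1) *
        Real.exp (-κ * p ^ 2 + 2 * ‖x‖ * |p|)) := by
        gcongr
    _ = G p := by
        simp only [hG]
        rw [mul_pow, ← Real.exp_nat_mul, mul_assoc, mul_assoc, mul_assoc, ← Real.exp_add]
        congr 3
        push_cast
        ring

lemma aux_Pform (x y : ℂ) (φ ρ : ℝ) (hφ : |φ| < π / 8) (hρ : 0 < ρ) (σ : ℂ)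
    (hσ : σ = Complex.exp (φ * Complex.I)) (hy : Complex.I * y = -4 * (ρ * σ) ^ 3) :
    P x y = σ / (2 * ρ) * Complex.exp (3 * (ρ * σ) ^ 4 - x * (ρ * σ) ^ 2) *
      ∫ p : ℝ, Complex.exp (q0 x σ p + ((((ρ ^ 2)⁻¹ : ℝ) : ℂ) * q1 x σ p + (((ρ ^ 2)⁻¹ : ℝ) : ℂ) ^ 2 * q2 σ p)) := by
  rw [aux_P, aux_rot x _ φ hφ, ← hσ]
  set g : ℝ → ℂ := fun u => Complex.exp (-(σ * u) ^ 4 - x * (σ * u) ^ 2 + Complex.I * y * (σ * u)) with hg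
  have h1 := Measure.integral_comp_mul_left (fun v => g (v - ρ)) (-ρ⁻¹)
  rw [integral_sub_right_eq_self g ρ] at h1
  have h2 : |(-ρ⁻¹)⁻¹| = ρ := by
    rw [inv_neg, inv_inv, abs_neg, abs_of_pos hρ]
  rw [h2] at h1
  have hρ' : (ρ : ℂ) ≠ 0 := by exact_mod_cast hρ.ne'
  have h3 : ∀ p : ℝ, g (-ρ⁻¹ * p - ρ) = Complex.exp (3 * (ρ * σ) ^ 4 - x * (ρ * σ) ^ 2) *
      Complex.exp (q0 x σ p + ((((ρ ^ 2)⁻¹ : ℝ) : ℂ) * q1 x σ p + (((ρ ^ 2)⁻¹ : ℝ) : ℂ) ^ 2 * q2 σ p)) := by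
    intro p
    rw [hg, ← Complex.exp_add, q0, q1, q2]
    simp only
    congr 1
    rw [hy]
    push_cast
    field_simp
    ring
  simp only [h3] at h1
  rw [integral_const_mul, Complex.real_smul] at h1
  rw [mul_assoc (σ / (2 * ρ)), h1]
  field_simp

/-- Complete asymptotic expansion of `P(x,y)` for large `|y|` in the sector
`π/8 < arg y ≤ π/2` (case 2): only the saddle point `t₂` contributes. -/
theorem pearcey_asymptotic_case2 (x : ℂ) (θ : ℝ)
    (hθ : θ ∈ Set.Ioc (π / 8) (π / 2)) (N : ℕ) :
    (fun r : ℝ =>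
        P x ((r : ℂ) * Complex.exp (Complex.I * (θ : ℂ))) *
            ((((2 : ℝ) ^ ((5 : ℝ) / 6) / Real.sqrt (π / 3) : ℝ)) : ℂ) *
            ((r : ℂ) * Complex.exp (Complex.I * (θ : ℂ))) ^ ((1 : ℂ) / 3) *
            Complex.exp
              (-3 * (4 : ℂ) ^ (-(4 : ℂ) / 3) * Complex.exp (-2 * (π : ℂ) * Complex.I / 3) *
                  ((r : ℂ) * Complex.exp (Complex.I * (θ : ℂ))) ^ ((4 : ℂ) / 3)
                + (4 : ℂ) ^ (-(2 : ℂ) / 3) * x *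
                  ((r : ℂ) * Complex.exp (Complex.I * (θ : ℂ))) ^ ((2 : ℂ) / 3) *
                  Complex.exp (-(π : ℂ) * Complex.I / 3)
                - x ^ 2 / 6)
          - ∑ n ∈ Finset.range (N + 1),
              Complex.exp ((2 * (n : ℂ) + 1) * (π : ℂ) * Complex.I / 6) * A x n *
                ((r : ℂ) * Complex.exp (Complex.I * (θ : ℂ))) ^ (-(2 * (n : ℂ)) / 3))
      =O[atTop] fun r : ℝ => r ^ (-(2 * ((N : ℝ) + 1)) / 3) := by
  obtain ⟨hθ1, hθ2⟩ := hθ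
  set φ : ℝ := θ / 3 - π / 6 with hφd
  have hπ := Real.pi_pos
  have hφ : |φ| < π / 8 := by rw [abs_lt]; constructor <;> linarith
  set σ : ℂ := Complex.exp (φ * Complex.I) with hσ
  have hσn : ‖σ‖ = 1 := Complex.norm_exp_ofReal_mul_I φ
  have hσ0 : σ ≠ 0 := Complex.exp_ne_zero _
  obtain ⟨hφ1, hφ2⟩ := abs_lt.1 hφ
  have h4 : 0 < (σ ^ 4).re := by
    rw [hσ, ← Complex.exp_nat_mul, show ((4 : ℕ) : ℂ) * (φ * Complex.I) = ((4 * φ : ℝ) : ℂ) * Complex.I by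
      push_cast; ring, Complex.exp_ofReal_mul_I_re]
    exact Real.cos_pos_of_mem_Ioo ⟨by linarith, by linarith⟩
  have h2 : 0 < (σ ^ 2).re := by
    rw [hσ, ← Complex.exp_nat_mul, show ((2 : ℕ) : ℂ) * (φ * Complex.I) = ((2 * φ : ℝ) : ℂ) * Complex.I by
      push_cast; ring, Complex.exp_ofReal_mul_I_re]
    exact Real.cos_pos_of_mem_Ioo ⟨by linarith, by linarith⟩
  obtain ⟨C, ε₀, hε₀, hest⟩ := aux_est x σ hσn h4 N
  set D : ℂ := Complex.exp (π * Complex.I / 6) * σ ^ 2 * ((Real.sqrt (π / 6) : ℂ))⁻¹ * Complex.exp (-(x ^ 2 / 6)) with hD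
  have hsq : (Real.sqrt (π / 6) : ℂ) ≠ 0 := by
    have : 0 < Real.sqrt (π / 6) := Real.sqrt_pos.2 (by positivity)
    exact_mod_cast this.ne'
  have hlog4 : Complex.log 4 = ((Real.log 4 : ℝ) : ℂ) := by
    rw [Complex.ofReal_log (by norm_num)]; norm_num
  have hl42 : Real.log 4 = 2 * Real.log 2 := by
    rw [show (4 : ℝ) = 2 ^ 2 by norm_num, Real.log_pow]; norm_num
  have key : ∀ r : ℝ, 0 < r → ∀ ρ ε : ℝ, ρ = Real.exp ((Real.log r - Real.log 4) / 3) → ε = (ρ ^ 2)⁻¹ →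
      (P x ((r : ℂ) * Complex.exp (Complex.I * (θ : ℂ))) *
            ((((2 : ℝ) ^ ((5 : ℝ) / 6) / Real.sqrt (π / 3) : ℝ)) : ℂ) *
            ((r : ℂ) * Complex.exp (Complex.I * (θ : ℂ))) ^ ((1 : ℂ) / 3) *
            Complex.exp
              (-3 * (4 : ℂ) ^ (-(4 : ℂ) / 3) * Complex.exp (-2 * (π : ℂ) * Complex.I / 3) *
                  ((r : ℂ) * Complex.exp (Complex.I * (θ : ℂ))) ^ ((4 : ℂ) / 3)
                + (4 : ℂ) ^ (-(2 : ℂ) / 3) * x *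
                  ((r : ℂ) * Complex.exp (Complex.I * (θ : ℂ))) ^ ((2 : ℂ) / 3) *
                  Complex.exp (-(π : ℂ) * Complex.I / 3)
                - x ^ 2 / 6)
          - ∑ n ∈ Finset.range (N + 1),
              Complex.exp ((2 * (n : ℂ) + 1) * (π : ℂ) * Complex.I / 6) * A x n *
                ((r : ℂ) * Complex.exp (Complex.I * (θ : ℂ))) ^ (-(2 * (n : ℂ)) / 3)) =
      D * ((∫ p : ℝ, Complex.exp (q0 x σ p + (ε * q1 x σ p + ε ^ 2 * q2 σ p))) -
        ∑ n ∈ Finset.range (N + 1), (ε : ℂ) ^ n * ∫ p, fn x σ n p) := by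
    intro r hr ρ ε hρ hε
    have hρ0 : 0 < ρ := hρ ▸ Real.exp_pos _
    have hρ' : (ρ : ℂ) ≠ 0 := by exact_mod_cast hρ0.ne'
    set y : ℂ := (r : ℂ) * Complex.exp (Complex.I * (θ : ℂ)) with hy
    have hy0 : y ≠ 0 := mul_ne_zero (by exact_mod_cast hr.ne') (Complex.exp_ne_zero _)
    have hlogy : Complex.log y = Real.log r + Complex.I * θ := by
      rw [hy, Complex.log_ofReal_mul hr (Complex.exp_ne_zero _), Complex.log_exp] <;> simp <;> linarith
    have hye : y = Complex.exp (Real.log r + Complex.I * θ) := by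
      rw [← hlogy, Complex.exp_log hy0]
    have hyp : ∀ α : ℂ, y ^ α = Complex.exp ((Real.log r + Complex.I * θ) * α) := by
      intro α; rw [Complex.cpow_def_of_ne_zero hy0, hlogy]
    have h4p : ∀ α : ℂ, (4 : ℂ) ^ α = Complex.exp (Real.log 4 * α) := by
      intro α; rw [Complex.cpow_def_of_ne_zero (by norm_num), hlog4]
    have hs : (ρ : ℂ) * σ = Complex.exp ((Real.log r - Real.log 4) / 3 + (θ / 3 - π / 6) * Complex.I) := by
      rw [hρ, hσ, hφd, Complex.exp_add]; push_cast; rfl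
    have e4 : (4 : ℂ) = Complex.exp (Real.log 4) := by
      rw [← hlog4, Complex.exp_log (by norm_num)]
    have i1 : Complex.I * y = -4 * (ρ * σ) ^ 3 := by
      have : Complex.I = - Complex.exp (-(π / 2 * Complex.I)) := by
        rw [Complex.exp_neg, Complex.exp_pi_div_two_mul_I, Complex.inv_I, neg_neg]
      conv_lhs => rw [this]
      rw [hs, hye, e4, ← Complex.exp_nat_mul, neg_mul, neg_mul, ← Complex.exp_add, ← Complex.exp_add]
      congr 2
      push_cast
      ring
    have i2 : (4 : ℂ) ^ (-(4 : ℂ) / 3) * Complex.exp (-2 * (π : ℂ) * Complex.I / 3) * y ^ ((4 : ℂ) / 3)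
        = (ρ * σ) ^ 4 := by
      rw [hs, hyp, h4p, ← Complex.exp_nat_mul, ← Complex.exp_add, ← Complex.exp_add]
      congr 1
      push_cast
      ring
    have i3 : (4 : ℂ) ^ (-(2 : ℂ) / 3) * y ^ ((2 : ℂ) / 3) * Complex.exp (-(π : ℂ) * Complex.I / 3)
        = (ρ * σ) ^ 2 := by
      rw [hs, hyp, h4p, ← Complex.exp_nat_mul, ← Complex.exp_add, ← Complex.exp_add]
      congr 1
      push_cast
      ring
    have i4 : y ^ ((1 : ℂ) / 3) = (ρ * σ) * Complex.exp (π * Complex.I / 6) * ((Real.exp (Real.log 4 / 3) : ℝ) : ℂ) := by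
      rw [hs, hyp, Complex.ofReal_exp, ← Complex.exp_add, ← Complex.exp_add]
      congr 1
      push_cast
      ring
    have i5 : (2 : ℝ) ^ ((5 : ℝ) / 6) / Real.sqrt (π / 3) * Real.exp (Real.log 4 / 3) = 2 * (Real.sqrt (π / 6))⁻¹ := by
      have a1 : Real.sqrt (π / 3) = Real.sqrt 2 * Real.sqrt (π / 6) := by
        rw [← Real.sqrt_mul (by norm_num)]; congr 1; ring
      have a2 : (2 : ℝ) ^ ((5 : ℝ) / 6) * Real.exp (Real.log 4 / 3) = 2 * Real.sqrt 2 := by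
        have hh : (2:ℝ) * Real.exp (Real.log 2 * (1/2)) = Real.exp (Real.log 2 + Real.log 2 * (1/2)) := by
          rw [Real.exp_add, Real.exp_log two_pos]
        rw [Real.sqrt_eq_rpow, Real.rpow_def_of_pos two_pos, Real.rpow_def_of_pos two_pos, hl42, hh, ← Real.exp_add]
        congr 1
        ring
      have a3 : Real.sqrt 2 ≠ 0 := by positivity
      have a4 : Real.sqrt (π / 6) ≠ 0 := by positivity
      rw [a1]
      field_simp
      linarith
    have i5' : ((((2 : ℝ) ^ ((5 : ℝ) / 6) / Real.sqrt (π / 3) : ℝ)) : ℂ) * ((Real.exp (Real.log 4 / 3) : ℝ) : ℂ)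
        = 2 * (Real.sqrt (π / 6) : ℂ)⁻¹ := by
      exact_mod_cast congrArg (fun t : ℝ => (t : ℂ)) i5
    have i6 : ∀ n : ℕ, Complex.exp ((2 * (n : ℂ) + 1) * (π : ℂ) * Complex.I / 6) * y ^ (-(2 * (n : ℂ)) / 3) =
        Complex.exp (π * Complex.I / 6) * ((ε : ℂ) ^ n * ((σ ^ 2)⁻¹) ^ n * (((2 : ℝ) ^ (-(4 * (n : ℝ) / 3)) : ℝ) : ℂ)) := by
      intro n
      have b1 : (ε : ℂ) ^ n * ((σ ^ 2)⁻¹) ^ n = Complex.exp (-(2 * n * ((Real.log r - Real.log 4) / 3 + (θ / 3 - π / 6) * Complex.I))) := by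
        rw [hε, ← mul_pow]
        push_cast
        rw [← mul_inv, ← mul_pow, hs, ← Complex.exp_nat_mul, ← Complex.exp_neg, ← Complex.exp_nat_mul]
        congr 1
        push_cast
        ring
      rw [b1, Real.rpow_def_of_pos two_pos, hyp, Complex.ofReal_exp, ← Complex.exp_add, ← Complex.exp_add, ← Complex.exp_add, hl42]
      congr 1
      push_cast
      ring
    rw [aux_Pform x y φ ρ hφ hρ0 σ hσ i1, i4]
    have i7 : (-3 * (4 : ℂ) ^ (-(4 : ℂ) / 3) * Complex.exp (-2 * (π : ℂ) * Complex.I / 3) *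
                  y ^ ((4 : ℂ) / 3)
                + (4 : ℂ) ^ (-(2 : ℂ) / 3) * x * y ^ ((2 : ℂ) / 3) * Complex.exp (-(π : ℂ) * Complex.I / 3)
                - x ^ 2 / 6) = -(3 * (ρ * σ) ^ 4 - x * (ρ * σ) ^ 2) + -(x ^ 2 / 6) := by
      rw [← i2, ← i3]; ring
    rw [i7, Complex.exp_add, Complex.exp_neg (3 * (ρ * σ) ^ 4 - x * (ρ * σ) ^ 2), ← hε, mul_sub]
    congr 1
    · have hE := Complex.exp_ne_zero (3 * (ρ * σ) ^ 4 - x * (ρ * σ) ^ 2)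
      generalize Complex.exp (3 * (ρ * σ) ^ 4 - x * (ρ * σ) ^ 2) = E at *
      generalize (∫ p : ℝ, Complex.exp (q0 x σ p + (ε * q1 x σ p + ε ^ 2 * q2 σ p))) = J at *
      rw [hD]
      generalize Complex.exp (π * Complex.I / 6) = w
      generalize Complex.exp (-(x ^ 2 / 6)) = v
      generalize ((((2 : ℝ) ^ ((5 : ℝ) / 6) / Real.sqrt (π / 3) : ℝ)) : ℂ) = k1 at *
      generalize ((Real.exp (Real.log 4 / 3) : ℝ) : ℂ) = k2 at *
      calc _ = (E * E⁻¹) * (ρ / ρ) * (k1 * k2) * (σ ^ 2 / 2 * J * w * v) := by ring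
        _ = _ := by
          rw [mul_inv_cancel₀ hE, div_self hρ', i5']; ring
    · rw [Finset.mul_sum]
      apply Finset.sum_congr rfl
      intro n _
      rw [aux_fn_val x σ h4 h2, hD]
      have hv : Complex.exp (-(x ^ 2 / 6)) * Complex.exp (x ^ 2 / 6) = 1 := by
        rw [← Complex.exp_add]; simp
      calc _ = (Complex.exp ((2 * (n : ℂ) + 1) * (π : ℂ) * Complex.I / 6) * y ^ (-(2 * (n : ℂ)) / 3)) * A x n := by ring
        _ = _ := by
          rw [i6]
          have hσ2 : σ ^ 2 * (σ ^ 2)⁻¹ = 1 := mul_inv_cancel₀ (pow_ne_zero _ hσ0)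
          have hqq : (Real.sqrt (π / 6) : ℂ)⁻¹ * (Real.sqrt (π / 6) : ℂ) = 1 := inv_mul_cancel₀ hsq
          generalize (((2 : ℝ) ^ (-(4 * (n : ℝ) / 3)) : ℝ) : ℂ) = k1
          generalize Complex.exp (-(x ^ 2 / 6)) = v1 at *
          generalize Complex.exp (x ^ 2 / 6) = v2 at *
          generalize (Real.sqrt (π / 6) : ℂ)⁻¹ = k3 at *
          generalize (Real.sqrt (π / 6) : ℂ) = k4 at *
          generalize (σ ^ 2)⁻¹ = τ at *
          generalize Complex.exp (π * Complex.I / 6) = w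
          calc _ = 1 * 1 * 1 * (w * (ε ^ n * τ ^ n * k1) * A x n) := by ring
            _ = (v1 * v2) * (σ ^ 2 * τ) * (k3 * k4) * (w * (ε ^ n * τ ^ n * k1) * A x n) := by
              rw [hv, hσ2, hqq]
            _ = _ := by ring
  have hεr : ∀ r : ℝ, 0 < r → ((Real.exp ((Real.log r - Real.log 4) / 3)) ^ 2)⁻¹ = Real.exp (2 * Real.log 4 / 3) * r ^ (-(2 / 3 : ℝ)) := by
    intro r hr
    rw [Real.rpow_def_of_pos hr, ← Real.exp_nat_mul, ← Real.exp_neg, ← Real.exp_add]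
    congr 1
    push_cast
    ring
  have htend : Tendsto (fun r : ℝ => Real.exp (2 * Real.log 4 / 3) * r ^ (-(2 / 3 : ℝ))) atTop (nhds 0) := by
    simpa using (tendsto_rpow_neg_atTop (show (0 : ℝ) < 2 / 3 by norm_num)).const_mul (Real.exp (2 * Real.log 4 / 3))
  refine IsBigO.of_bound (‖D‖ * (C * Real.exp (2 * Real.log 4 / 3) ^ (N + 1))) ?_
  filter_upwards [eventually_gt_atTop 0, htend.eventually_le_const hε₀] with r hr hrε
  rw [key r hr _ _ rfl rfl, norm_mul, mul_assoc]
  refine mul_le_mul_of_nonneg_left ?_ (norm_nonneg _)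
  have hpos : 0 < ((Real.exp ((Real.log r - Real.log 4) / 3)) ^ 2)⁻¹ := by positivity
  refine (hest _ hpos (by rw [hεr r hr]; exact hrε)).trans (le_of_eq ?_)
  rw [hεr r hr, mul_pow, Real.norm_eq_abs, abs_of_pos (Real.rpow_pos_of_pos hr _), ← Real.rpow_natCast (r ^ _),
    ← Real.rpow_mul hr.le, mul_assoc]
  congr 3
  push_cast
  ring
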